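/- arXiv:1904.08299 — 7 statements merged into one kernel-verified Lean document; each statement's English description precedes it below -/
import Mathlib

section
/- Let α, a, b, c, x₁, x₂ be real numbers with ρ := √(x₁² + x₂²) > 0, and let M = M(α,a,b,c,x₁,x₂) be the meridional EFG tensor. Then for every λ ∈ ℝ, det(λ·I₃ − M) = (λ − a/ρ)·(λ² − (α−1)·(a/ρ)·λ + (α−1)·(a/ρ)·c − b² − c²). Consequently the eigenvalues of M are exactly λ₀ = a/ρ and λ₁,₂ = (α−1)·a/(2ρ) ± √( ((α−1)·a/(2ρ))² − (α−1)·(a/ρ)·c + b² + c² ), where the quantity under the square root equals ((α−1)·a/(2ρ) − c)² + b² and is therefore nonnegative. -/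
/-- The meridional EFG (electric field gradient) tensor, with `a = E_ρ`,
`b = ∂E_ρ/∂x₀`, `c = ∂E_ρ/∂ρ`, `ρ = √(x₁² + x₂²)`. -/
noncomputable def meridionalEFG (α a b c x₁ x₂ : ℝ) : Matrix (Fin 3) (Fin 3) ℝ :=
  let ρ := Real.sqrt (x₁ ^ 2 + x₂ ^ 2)
  !![-c + (α - 1) * a / ρ, b * x₁ / ρ, b * x₂ / ρ;
     b * x₁ / ρ, c * x₁ ^ 2 / ρ ^ 2 + (a / ρ) * x₂ ^ 2 / ρ ^ 2, (c - a / ρ) * x₁ * x₂ / ρ ^ 2;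
     b * x₂ / ρ, (c - a / ρ) * x₁ * x₂ / ρ ^ 2, c * x₂ ^ 2 / ρ ^ 2 + (a / ρ) * x₁ ^ 2 / ρ ^ 2]

/-- Determinant identity in normalized variables `u = x₁/ρ`, `v = x₂/ρ`, `k = a/ρ`. -/
theorem meridionalEFG_det_aux (α a b c x₁ x₂ : ℝ) (hρ : 0 < Real.sqrt (x₁ ^ 2 + x₂ ^ 2))
    (lam : ℝ) :
    (lam • (1 : Matrix (Fin 3) (Fin 3) ℝ) - meridionalEFG α a b c x₁ x₂).det =
      (lam - a / Real.sqrt (x₁ ^ 2 + x₂ ^ 2)) *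
        (lam ^ 2 - (α - 1) * (a / Real.sqrt (x₁ ^ 2 + x₂ ^ 2)) * lam
          + (α - 1) * (a / Real.sqrt (x₁ ^ 2 + x₂ ^ 2)) * c - b ^ 2 - c ^ 2) := by
  have hsq : Real.sqrt (x₁ ^ 2 + x₂ ^ 2) ^ 2 = x₁ ^ 2 + x₂ ^ 2 := Real.sq_sqrt (by positivity)
  unfold meridionalEFG
  generalize Real.sqrt (x₁ ^ 2 + x₂ ^ 2) = r at *
  obtain ⟨u, rfl⟩ : ∃ u, x₁ = u * r := ⟨x₁ / r, by field_simp⟩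
  obtain ⟨v, rfl⟩ : ∃ v, x₂ = v * r := ⟨x₂ / r, by field_simp⟩
  obtain ⟨k, rfl⟩ : ∃ k, a = k * r := ⟨a / r, by field_simp⟩
  have hr : r ≠ 0 := hρ.ne'
  have hs : u ^ 2 + v ^ 2 = 1 := by
    have h2 : r ^ 2 ≠ 0 := pow_ne_zero 2 hr
    apply mul_right_cancel₀ h2
    linear_combination -hsq
  have e1 : k * r / r = k := by field_simp
  have e2 : (α - 1) * (k * r) / r = (α - 1) * k := by field_simp
  have e3 : b * (u * r) / r = b * u := by field_simp
  have e4 : b * (v * r) / r = b * v := by field_simp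
  have e5 (y z : ℝ) : y * (z * r) ^ 2 / r ^ 2 = y * z ^ 2 := by field_simp
  have e6 : (c - k) * (u * r) * (v * r) / r ^ 2 = (c - k) * u * v := by field_simp
  simp only [e1, e2, e3, e4, e5, e6]
  rw [Matrix.det_fin_three]
  simp [Matrix.one_apply]
  linear_combination ((lam + c - (α - 1) * k) * (-lam * (c + k) + c * k * (u ^ 2 + v ^ 2 + 1))
    - b ^ 2 * (lam - k * (u ^ 2 + v ^ 2 + 1))) * hs

/-- roots of the characteristic equation of the meridional EFG tensor. -/
theorem meridionalEFG_char_roots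
    (α a b c x₁ x₂ : ℝ) (hρ : 0 < Real.sqrt (x₁ ^ 2 + x₂ ^ 2)) :
    (∀ lam : ℝ,
        (lam • (1 : Matrix (Fin 3) (Fin 3) ℝ) - meridionalEFG α a b c x₁ x₂).det =
          (lam - a / Real.sqrt (x₁ ^ 2 + x₂ ^ 2)) *
            (lam ^ 2 - (α - 1) * (a / Real.sqrt (x₁ ^ 2 + x₂ ^ 2)) * lam
              + (α - 1) * (a / Real.sqrt (x₁ ^ 2 + x₂ ^ 2)) * c - b ^ 2 - c ^ 2)) ∧
    (((α - 1) * a / (2 * Real.sqrt (x₁ ^ 2 + x₂ ^ 2))) ^ 2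
        - (α - 1) * (a / Real.sqrt (x₁ ^ 2 + x₂ ^ 2)) * c + b ^ 2 + c ^ 2 =
      ((α - 1) * a / (2 * Real.sqrt (x₁ ^ 2 + x₂ ^ 2)) - c) ^ 2 + b ^ 2) ∧
    (0 ≤ ((α - 1) * a / (2 * Real.sqrt (x₁ ^ 2 + x₂ ^ 2))) ^ 2
        - (α - 1) * (a / Real.sqrt (x₁ ^ 2 + x₂ ^ 2)) * c + b ^ 2 + c ^ 2) ∧
    (∀ lam : ℝ,
        (lam • (1 : Matrix (Fin 3) (Fin 3) ℝ) - meridionalEFG α a b c x₁ x₂).det = 0 ↔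
          lam = a / Real.sqrt (x₁ ^ 2 + x₂ ^ 2) ∨
          lam = (α - 1) * a / (2 * Real.sqrt (x₁ ^ 2 + x₂ ^ 2))
              + Real.sqrt (((α - 1) * a / (2 * Real.sqrt (x₁ ^ 2 + x₂ ^ 2))) ^ 2
                  - (α - 1) * (a / Real.sqrt (x₁ ^ 2 + x₂ ^ 2)) * c + b ^ 2 + c ^ 2) ∨
          lam = (α - 1) * a / (2 * Real.sqrt (x₁ ^ 2 + x₂ ^ 2))
              - Real.sqrt (((α - 1) * a / (2 * Real.sqrt (x₁ ^ 2 + x₂ ^ 2))) ^ 2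
                  - (α - 1) * (a / Real.sqrt (x₁ ^ 2 + x₂ ^ 2)) * c + b ^ 2 + c ^ 2)) := by
  have hdisc : ((α - 1) * a / (2 * Real.sqrt (x₁ ^ 2 + x₂ ^ 2))) ^ 2
        - (α - 1) * (a / Real.sqrt (x₁ ^ 2 + x₂ ^ 2)) * c + b ^ 2 + c ^ 2 =
      ((α - 1) * a / (2 * Real.sqrt (x₁ ^ 2 + x₂ ^ 2)) - c) ^ 2 + b ^ 2 := by
    field_simp
    ring
  have hnn : 0 ≤ ((α - 1) * a / (2 * Real.sqrt (x₁ ^ 2 + x₂ ^ 2))) ^ 2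
        - (α - 1) * (a / Real.sqrt (x₁ ^ 2 + x₂ ^ 2)) * c + b ^ 2 + c ^ 2 := by
    rw [hdisc]
    positivity
  refine ⟨meridionalEFG_det_aux α a b c x₁ x₂ hρ, hdisc, hnn, fun lam => ?_⟩
  rw [meridionalEFG_det_aux α a b c x₁ x₂ hρ lam]
  have hS := Real.sq_sqrt hnn
  have hm : (α - 1) * (a / Real.sqrt (x₁ ^ 2 + x₂ ^ 2)) =
      2 * ((α - 1) * a / (2 * Real.sqrt (x₁ ^ 2 + x₂ ^ 2))) := by
    field_simp
  generalize Real.sqrt (((α - 1) * a / (2 * Real.sqrt (x₁ ^ 2 + x₂ ^ 2))) ^ 2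
        - (α - 1) * (a / Real.sqrt (x₁ ^ 2 + x₂ ^ 2)) * c + b ^ 2 + c ^ 2) = S at *
  rw [hm] at hS ⊢
  generalize (α - 1) * a / (2 * Real.sqrt (x₁ ^ 2 + x₂ ^ 2)) = m at *
  have hf : lam ^ 2 - 2 * m * lam + 2 * m * c - b ^ 2 - c ^ 2 =
      (lam - (m + S)) * (lam - (m - S)) := by
    linear_combination hS
  rw [hf, mul_eq_zero, mul_eq_zero, sub_eq_zero, sub_eq_zero, sub_eq_zero]
end

section
/- Let α, a, b, c, x₁, x₂ be real numbers with ρ := √(x₁² + x₂²) > 0, and let M = M(α,a,b,c,x₁,x₂) be the meridional EFG tensor. Then its three principal invariants are: trace(M) = α·a/ρ; the second invariant (sum of the three principal 2×2 minors) equals −(b² + c²) + (α−1)·(a/ρ)·(c + a/ρ); and det(M) = −(a/ρ)·(b² + c²) + (α−1)·(a/ρ)²·c. -/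
/-- The second principal invariant of a 3×3 matrix: the sum of its three
principal 2×2 minors. -/
def secondInvariant (M : Matrix (Fin 3) (Fin 3) ℝ) : ℝ :=
  (M 0 0 * M 1 1 - M 0 1 * M 1 0) + (M 0 0 * M 2 2 - M 0 2 * M 2 0)
    + (M 1 1 * M 2 2 - M 1 2 * M 2 1)

/-- the principal invariants of the meridional EFG tensor. -/
theorem meridionalEFG_invariants
    (α a b c x₁ x₂ : ℝ) (hρ : 0 < Real.sqrt (x₁ ^ 2 + x₂ ^ 2)) :
    (meridionalEFG α a b c x₁ x₂).trace = α * a / Real.sqrt (x₁ ^ 2 + x₂ ^ 2) ∧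
    secondInvariant (meridionalEFG α a b c x₁ x₂) =
      -(b ^ 2 + c ^ 2) + (α - 1) * (a / Real.sqrt (x₁ ^ 2 + x₂ ^ 2)) *
        (c + a / Real.sqrt (x₁ ^ 2 + x₂ ^ 2)) ∧
    (meridionalEFG α a b c x₁ x₂).det =
      -(a / Real.sqrt (x₁ ^ 2 + x₂ ^ 2)) * (b ^ 2 + c ^ 2)
        + (α - 1) * (a / Real.sqrt (x₁ ^ 2 + x₂ ^ 2)) ^ 2 * c := by
  have hsq : Real.sqrt (x₁ ^ 2 + x₂ ^ 2) ^ 2 = x₁ ^ 2 + x₂ ^ 2 := Real.sq_sqrt (by positivity)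
  unfold secondInvariant meridionalEFG
  generalize Real.sqrt (x₁ ^ 2 + x₂ ^ 2) = ρ at *
  have hne : ρ ≠ 0 := hρ.ne'
  obtain ⟨u, rfl⟩ : ∃ u, x₁ = u * ρ := ⟨x₁ / ρ, by field_simp⟩
  obtain ⟨v, rfl⟩ : ∃ v, x₂ = v * ρ := ⟨x₂ / ρ, by field_simp⟩
  obtain ⟨k, rfl⟩ : ∃ k, a = k * ρ := ⟨a / ρ, by field_simp⟩
  have hs : u ^ 2 + v ^ 2 = 1 := by
    have h2 : ρ ^ 2 ≠ 0 := pow_ne_zero 2 hne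
    apply mul_right_cancel₀ h2
    linear_combination -hsq
  have e0 : (α - 1) * (k * ρ) / ρ = (α - 1) * k := by field_simp
  have e1 : b * (u * ρ) / ρ = b * u := by field_simp
  have e2 : b * (v * ρ) / ρ = b * v := by field_simp
  have e3 : k * ρ / ρ = k := by field_simp
  have e4 : ∀ t w : ℝ, t * (w * ρ) ^ 2 / ρ ^ 2 = t * w ^ 2 := by intro t w; field_simp
  have e5 : (c - k) * (u * ρ) * (v * ρ) / ρ ^ 2 = (c - k) * u * v := by field_simp
  have e6 : α * (k * ρ) / ρ = α * k := by field_simp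
  simp only [e0, e1, e2, e3, e4, e5, e6]
  refine ⟨?_, ?_, ?_⟩
  · simp [Matrix.trace, Fin.sum_univ_three]
    linear_combination (c + k) * hs
  · simp
    linear_combination ((-c + (α - 1) * k) * (c + k) - b ^ 2 + c * k * (u ^ 2 + v ^ 2 + 1)) * hs
  · simp [Matrix.det_fin_three]
    linear_combination ((-c + (α - 1) * k) * c * k - b ^ 2 * k) * (u ^ 2 + v ^ 2 + 1) * hs
end

section
/- Let α, a, b, c, x₁, x₂ be real numbers with ρ := √(x₁² + x₂²) > 0, and let M = M(α,a,b,c,x₁,x₂) be the meridional EFG tensor. Then det(M) = 0 if and only if a = 0 or b² + c² − (α−1)·(a/ρ)·c = 0. -/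
/-- the singular set of the meridional EFG tensor. -/
theorem meridionalEFG_singular_set
    (α a b c x₁ x₂ : ℝ) (hρ : 0 < Real.sqrt (x₁ ^ 2 + x₂ ^ 2)) :
    (meridionalEFG α a b c x₁ x₂).det = 0 ↔
      a = 0 ∨
      b ^ 2 + c ^ 2 - (α - 1) * (a / Real.sqrt (x₁ ^ 2 + x₂ ^ 2)) * c = 0 := by
  have hs : Real.sqrt (x₁ ^ 2 + x₂ ^ 2) ^ 2 = x₁ ^ 2 + x₂ ^ 2 := Real.sq_sqrt (by positivity)
  have key : (meridionalEFG α a b c x₁ x₂).det =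
      -((a / Real.sqrt (x₁ ^ 2 + x₂ ^ 2)) *
        (b ^ 2 + c ^ 2 - (α - 1) * (a / Real.sqrt (x₁ ^ 2 + x₂ ^ 2)) * c)) := by
    unfold meridionalEFG
    generalize Real.sqrt (x₁ ^ 2 + x₂ ^ 2) = r at hρ hs
    have hr : r ≠ 0 := hρ.ne'
    have h1 : (x₁ / r) ^ 2 + (x₂ / r) ^ 2 = 1 := by
      field_simp
      exact hs.symm
    have hd : (-((a / r) * (b ^ 2 + c ^ 2 - (α - 1) * (a / r) * c))) =
        (-((a / r) * (b ^ 2 + c ^ 2 - (α - 1) * (a / r) * c))) *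
          ((x₁ / r) ^ 2 + (x₂ / r) ^ 2) ^ 2 := by
      rw [h1]; ring
    rw [hd]
    simp [Matrix.det_fin_three]
    ring
  rw [key, neg_eq_zero, mul_eq_zero, div_eq_zero_iff]
  simp [hρ.ne']
end

section
/- Let a, b, c, x₁, x₂ be real numbers with ρ := √(x₁² + x₂²) > 0, and let M = M(1,a,b,c,x₁,x₂) be the meridional EFG tensor with parameter α = 1. Then for every λ ∈ ℝ, det(λ·I₃ − M) = (λ − a/ρ)·(λ² − b² − c²); hence the eigenvalues of M are exactly a/ρ, +√(b² + c²), and −√(b² + c²). Moreover trace(M) = a/ρ, the second principal invariant equals −(b² + c²), and det(M) = −(a/ρ)·(b² + c²). -/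
/-- The tensor for `α = 1` in terms of the direction `(u, v)` and `k = a / ρ`. -/
theorem meridionalEFG_one_form (a b c x₁ x₂ : ℝ) (hρ : 0 < Real.sqrt (x₁ ^ 2 + x₂ ^ 2)) :
    ∃ u v : ℝ, u ^ 2 + v ^ 2 = 1 ∧ meridionalEFG 1 a b c x₁ x₂ =
      !![-c, b * u, b * v;
         b * u, c * u ^ 2 + (a / Real.sqrt (x₁ ^ 2 + x₂ ^ 2)) * v ^ 2,
           (c - a / Real.sqrt (x₁ ^ 2 + x₂ ^ 2)) * u * v;
         b * v, (c - a / Real.sqrt (x₁ ^ 2 + x₂ ^ 2)) * u * v,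
           c * v ^ 2 + (a / Real.sqrt (x₁ ^ 2 + x₂ ^ 2)) * u ^ 2] := by
  have hs : Real.sqrt (x₁ ^ 2 + x₂ ^ 2) ^ 2 = x₁ ^ 2 + x₂ ^ 2 := Real.sq_sqrt (by positivity)
  unfold meridionalEFG
  generalize Real.sqrt (x₁ ^ 2 + x₂ ^ 2) = r at *
  refine ⟨x₁ / r, x₂ / r, ?_, ?_⟩
  · rw [div_pow, div_pow, ← add_div, ← hs, div_self (by positivity)]
  · ext i j
    fin_cases i <;> fin_cases j <;> simp <;> ring

/-- the case α = 1 (the Fueter holomorphic potential setting). -/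
theorem meridionalEFG_alpha_one
    (a b c x₁ x₂ : ℝ) (hρ : 0 < Real.sqrt (x₁ ^ 2 + x₂ ^ 2)) :
    (∀ lam : ℝ,
        (lam • (1 : Matrix (Fin 3) (Fin 3) ℝ) - meridionalEFG 1 a b c x₁ x₂).det =
          (lam - a / Real.sqrt (x₁ ^ 2 + x₂ ^ 2)) * (lam ^ 2 - b ^ 2 - c ^ 2)) ∧
    (∀ lam : ℝ,
        (lam • (1 : Matrix (Fin 3) (Fin 3) ℝ) - meridionalEFG 1 a b c x₁ x₂).det = 0 ↔
          lam = a / Real.sqrt (x₁ ^ 2 + x₂ ^ 2) ∨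
          lam = Real.sqrt (b ^ 2 + c ^ 2) ∨ lam = -Real.sqrt (b ^ 2 + c ^ 2)) ∧
    (meridionalEFG 1 a b c x₁ x₂).trace = a / Real.sqrt (x₁ ^ 2 + x₂ ^ 2) ∧
    secondInvariant (meridionalEFG 1 a b c x₁ x₂) = -(b ^ 2 + c ^ 2) ∧
    (meridionalEFG 1 a b c x₁ x₂).det =
      -(a / Real.sqrt (x₁ ^ 2 + x₂ ^ 2)) * (b ^ 2 + c ^ 2) := by
  obtain ⟨u, v, h, hM⟩ := meridionalEFG_one_form a b c x₁ x₂ hρ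
  rw [hM]
  generalize a / Real.sqrt (x₁ ^ 2 + x₂ ^ 2) = k at *
  have key : ∀ lam : ℝ, (lam • (1 : Matrix (Fin 3) (Fin 3) ℝ) -
      !![-c, b * u, b * v; b * u, c * u ^ 2 + k * v ^ 2, (c - k) * u * v;
         b * v, (c - k) * u * v, c * v ^ 2 + k * u ^ 2]).det =
      (lam - k) * (lam ^ 2 - b ^ 2 - c ^ 2) := by
    intro lam
    trans (lam + c) * (lam - c * (u ^ 2 + v ^ 2)) * (lam - k * (u ^ 2 + v ^ 2)) -
      b ^ 2 * (u ^ 2 + v ^ 2) * (lam - k * (u ^ 2 + v ^ 2))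
    · simp [Matrix.det_fin_three]
      ring
    · rw [h]
      ring
  refine ⟨key, ?_, ?_, ?_, ?_⟩
  · intro lam
    have hs : Real.sqrt (b ^ 2 + c ^ 2) ^ 2 = b ^ 2 + c ^ 2 := Real.sq_sqrt (by positivity)
    have e : lam ^ 2 - b ^ 2 - c ^ 2 = lam ^ 2 - Real.sqrt (b ^ 2 + c ^ 2) ^ 2 := by
      rw [hs]
      ring
    rw [key, mul_eq_zero, sub_eq_zero, e, sub_eq_zero, sq_eq_sq_iff_eq_or_eq_neg]
  · simp [Matrix.trace_fin_three]
    linear_combination (c + k) * h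
  · trans -c * (c + k) * (u ^ 2 + v ^ 2) - b ^ 2 * (u ^ 2 + v ^ 2) + c * k * (u ^ 2 + v ^ 2) ^ 2
    · simp [secondInvariant]
      ring
    · rw [h]
      ring
  · have h0 := key 0
    rw [zero_smul, zero_sub, Matrix.det_neg, Fintype.card_fin] at h0
    linear_combination -h0
end

section
/- Let a, b, c, x₁, x₂ be real numbers with ρ := √(x₁² + x₂²) > 0, and let M = M(0,a,b,c,x₁,x₂) be the meridional EFG tensor with parameter α = 0. Then trace(M) = 0, so the characteristic equation has the incomplete cubic form λ³ + II·λ − III = 0 with II = −(b² + c²) − (a/ρ)·c − (a/ρ)² and III = −(a/ρ)·(b² + c²) − (a/ρ)²·c; and the eigenvalues of M are exactly λ₀ = a/ρ and λ₁,₂ = −a/(2ρ) ± √( (a/(2ρ))² + (a/ρ)·c + b² + c² ). -/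
/-- the case α = 0 (homogeneous media): trace vanishes, the
characteristic equation takes the incomplete cubic form, and the eigenvalues. -/
theorem meridionalEFG_alpha_zero
    (a b c x₁ x₂ : ℝ) (hρ : 0 < Real.sqrt (x₁ ^ 2 + x₂ ^ 2)) :
    (meridionalEFG 0 a b c x₁ x₂).trace = 0 ∧
    (∀ lam : ℝ,
        (lam • (1 : Matrix (Fin 3) (Fin 3) ℝ) - meridionalEFG 0 a b c x₁ x₂).det =
          lam ^ 3
            + (-(b ^ 2 + c ^ 2) - (a / Real.sqrt (x₁ ^ 2 + x₂ ^ 2)) * c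
                - (a / Real.sqrt (x₁ ^ 2 + x₂ ^ 2)) ^ 2) * lam
            - (-(a / Real.sqrt (x₁ ^ 2 + x₂ ^ 2)) * (b ^ 2 + c ^ 2)
                - (a / Real.sqrt (x₁ ^ 2 + x₂ ^ 2)) ^ 2 * c)) ∧
    (∀ lam : ℝ,
        (lam • (1 : Matrix (Fin 3) (Fin 3) ℝ) - meridionalEFG 0 a b c x₁ x₂).det = 0 ↔
          lam = a / Real.sqrt (x₁ ^ 2 + x₂ ^ 2) ∨
          lam = -(a / (2 * Real.sqrt (x₁ ^ 2 + x₂ ^ 2)))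
              + Real.sqrt ((a / (2 * Real.sqrt (x₁ ^ 2 + x₂ ^ 2))) ^ 2
                  + (a / Real.sqrt (x₁ ^ 2 + x₂ ^ 2)) * c + b ^ 2 + c ^ 2) ∨
          lam = -(a / (2 * Real.sqrt (x₁ ^ 2 + x₂ ^ 2)))
              - Real.sqrt ((a / (2 * Real.sqrt (x₁ ^ 2 + x₂ ^ 2))) ^ 2
                  + (a / Real.sqrt (x₁ ^ 2 + x₂ ^ 2)) * c + b ^ 2 + c ^ 2)) := by
  have hsq : Real.sqrt (x₁ ^ 2 + x₂ ^ 2) ^ 2 = x₁ ^ 2 + x₂ ^ 2 := Real.sq_sqrt (by positivity)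
  have hM : ∃ u v : ℝ, u ^ 2 + v ^ 2 = 1 ∧ meridionalEFG 0 a b c x₁ x₂ =
      !![-c - a / Real.sqrt (x₁ ^ 2 + x₂ ^ 2), b * u, b * v;
        b * u, c * u ^ 2 + (a / Real.sqrt (x₁ ^ 2 + x₂ ^ 2)) * v ^ 2,
          (c - a / Real.sqrt (x₁ ^ 2 + x₂ ^ 2)) * u * v;
        b * v, (c - a / Real.sqrt (x₁ ^ 2 + x₂ ^ 2)) * u * v,
          c * v ^ 2 + (a / Real.sqrt (x₁ ^ 2 + x₂ ^ 2)) * u ^ 2] := by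
    refine ⟨x₁ / Real.sqrt (x₁ ^ 2 + x₂ ^ 2), x₂ / Real.sqrt (x₁ ^ 2 + x₂ ^ 2), ?_, ?_⟩
    · rw [div_pow, div_pow, ← add_div, hsq]
      refine div_self ?_
      rw [← hsq]
      exact (pow_pos hρ 2).ne'
    · unfold meridionalEFG
      ext i j
      fin_cases i <;> fin_cases j <;> simp <;> ring
  obtain ⟨u, v, huv, hM⟩ := hM
  have hhalf : a / (2 * Real.sqrt (x₁ ^ 2 + x₂ ^ 2)) = a / Real.sqrt (x₁ ^ 2 + x₂ ^ 2) / 2 := by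
    rw [mul_comm, div_div]
  rw [hM, hhalf]
  generalize a / Real.sqrt (x₁ ^ 2 + x₂ ^ 2) = A
  have hdet : ∀ lam : ℝ, (lam • (1 : Matrix (Fin 3) (Fin 3) ℝ) -
      !![-c - A, b * u, b * v;
        b * u, c * u ^ 2 + A * v ^ 2, (c - A) * u * v;
        b * v, (c - A) * u * v, c * v ^ 2 + A * u ^ 2]).det =
          lam ^ 3 + (-(b ^ 2 + c ^ 2) - A * c - A ^ 2) * lam
            - (-A * (b ^ 2 + c ^ 2) - A ^ 2 * c) := by
    intro lam
    rw [Matrix.det_fin_three]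
    simp
    linear_combination ((lam + c + A) * (-(c + A) * lam + c * A * (u ^ 2 + v ^ 2 + 1))
      - b ^ 2 * (lam - A * (u ^ 2 + v ^ 2 + 1))) * huv
  refine ⟨?_, hdet, ?_⟩
  · rw [Matrix.trace_fin_three]
    simp
    linear_combination (c + A) * huv
  · intro lam
    rw [hdet]
    have hD : 0 ≤ (A / 2) ^ 2 + A * c + b ^ 2 + c ^ 2 := by
      nlinarith [sq_nonneg (A / 2 + c), sq_nonneg b]
    have hS := Real.sq_sqrt hD
    generalize Real.sqrt ((A / 2) ^ 2 + A * c + b ^ 2 + c ^ 2) = S at hS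
    have hfac : lam ^ 3 + (-(b ^ 2 + c ^ 2) - A * c - A ^ 2) * lam
            - (-A * (b ^ 2 + c ^ 2) - A ^ 2 * c) =
        (lam - A) * ((lam - (-(A / 2) + S)) * (lam - (-(A / 2) - S))) := by
      linear_combination (lam - A) * hS
    rw [hfac, mul_eq_zero, mul_eq_zero, sub_eq_zero, sub_eq_zero, sub_eq_zero]
end

section
/- Let α, λ̆ ∈ ℝ. Let s : ℝ → ℝ be twice continuously differentiable with s''(x₁) + λ̆²·s(x₁) = 0 for all x₁, and let g : ℝ × (0,∞) → ℝ be twice continuously differentiable with ∂²g/∂x₀² + ∂²g/∂x₂² − (α/x₂)·∂g/∂x₂ − λ̆²·g = 0 for all (x₀, x₂) with x₂ > 0. Then the function h(x₀, x₁, x₂) := g(x₀, x₂)·s(x₁) satisfies the Weinstein equation x₂·Δh − α·∂h/∂x₂ = 0 at every point with x₂ > 0. -/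
/-- first separation-of-variables step for the Weinstein equation
in Cartesian coordinates. -/
theorem weinstein_separation_first
    (α lam : ℝ)
    (s : ℝ → ℝ) (hs2 : ContDiff ℝ 2 s)
    (hs : ∀ x₁ : ℝ, deriv (deriv s) x₁ + lam ^ 2 * s x₁ = 0)
    (g : ℝ → ℝ → ℝ)
    (hg2 : ContDiffOn ℝ 2 (fun q : ℝ × ℝ => g q.1 q.2) {q : ℝ × ℝ | 0 < q.2})
    (hg : ∀ x₀ x₂ : ℝ, 0 < x₂ →
        deriv (deriv (fun t => g t x₂)) x₀ + deriv (deriv (fun t => g x₀ t)) x₂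
          - (α / x₂) * deriv (fun t => g x₀ t) x₂ - lam ^ 2 * g x₀ x₂ = 0) :
    ∀ x₀ x₁ x₂ : ℝ, 0 < x₂ →
      x₂ * (deriv (deriv (fun t => g t x₂ * s x₁)) x₀
            + deriv (deriv (fun t => g x₀ x₂ * s t)) x₁
            + deriv (deriv (fun t => g x₀ t * s x₁)) x₂)
        - α * deriv (fun t => g x₀ t * s x₁) x₂ = 0 := by
  intro x₀ x₁ x₂ hx
  have key : ∀ (f : ℝ → ℝ) (c : ℝ), deriv (fun t => f t * c) = fun t => deriv f t * c := by
    intro f c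
    funext t
    exact deriv_mul_const_field c
  have key' : ∀ (f : ℝ → ℝ) (c : ℝ), deriv (fun t => c * f t) = fun t => c * deriv f t := by
    intro f c
    funext t
    exact deriv_const_mul_field c
  rw [key (fun t => g t x₂), key (fun t => g x₀ t), key' s, key, key, key']
  have h1 := hs x₁
  have h2 := hg x₀ x₂ hx
  have h3 : x₂ * (α / x₂) = α := by field_simp
  linear_combination (x₂ * s x₁) * h2 + (x₂ * g x₀ x₂) * h1
    + (s x₁ * deriv (fun t => g x₀ t) x₂) * h3
end

section
/- Let a₃, a₁ ∈ ℝ and (x₀,x₁,x₂) ∈ ℝ³ with ρ² := x₁² + x₂² > 0. Let M := a₃·M₁ + a₁·M₂, where M₁ := [[3x₀² − 3x₁² − 3x₂², −6x₀x₁, −6x₀x₂], [−6x₀x₁, −3x₀² + 3x₁² + x₂², 2x₁x₂], [−6x₀x₂, 2x₁x₂, −3x₀² + x₁² + 3x₂²]] and M₂ := diag(1, −1, −1). Then for every λ ∈ ℝ, det(λ·I₃ − M) = (λ − λ₀)·(λ² − D), where λ₀ = −3a₃x₀² + a₃ρ² − a₁ and D = (3a₃x₀² − 3a₃ρ² + a₁)²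 + 36a₃²x₀²ρ²; hence the eigenvalues of M are exactly λ₀ and ±√( (3a₃x₀² − 3a₃ρ² + a₁)² + 36a₃²x₀²ρ² ). -/
/-- First component of the EFG tensor of the cubic-polynomial Fueter potential. -/
def cubicEFG₁ (x₀ x₁ x₂ : ℝ) : Matrix (Fin 3) (Fin 3) ℝ :=
  !![3 * x₀ ^ 2 - 3 * x₁ ^ 2 - 3 * x₂ ^ 2, -6 * x₀ * x₁, -6 * x₀ * x₂;
     -6 * x₀ * x₁, -3 * x₀ ^ 2 + 3 * x₁ ^ 2 + x₂ ^ 2, 2 * x₁ * x₂;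
     -6 * x₀ * x₂, 2 * x₁ * x₂, -3 * x₀ ^ 2 + x₁ ^ 2 + 3 * x₂ ^ 2]

/-- Second component of the EFG tensor of the cubic-polynomial Fueter potential. -/
def cubicEFG₂ : Matrix (Fin 3) (Fin 3) ℝ :=
  !![1, 0, 0; 0, -1, 0; 0, 0, -1]

/-- roots of the characteristic equation of the EFG tensor of the
meridional field of the reduced quaternionic cubic polynomial. -/
theorem cubicEFG_char_roots
    (a₃ a₁ x₀ x₁ x₂ : ℝ) (hρ : 0 < x₁ ^ 2 + x₂ ^ 2) :
    (∀ lam : ℝ,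
        (lam • (1 : Matrix (Fin 3) (Fin 3) ℝ)
            - (a₃ • cubicEFG₁ x₀ x₁ x₂ + a₁ • cubicEFG₂)).det =
          (lam - (-3 * a₃ * x₀ ^ 2 + a₃ * (x₁ ^ 2 + x₂ ^ 2) - a₁)) *
            (lam ^ 2 - ((3 * a₃ * x₀ ^ 2 - 3 * a₃ * (x₁ ^ 2 + x₂ ^ 2) + a₁) ^ 2
                + 36 * a₃ ^ 2 * x₀ ^ 2 * (x₁ ^ 2 + x₂ ^ 2)))) ∧
    (∀ lam : ℝ,
        (lam • (1 : Matrix (Fin 3) (Fin 3) ℝ)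
            - (a₃ • cubicEFG₁ x₀ x₁ x₂ + a₁ • cubicEFG₂)).det = 0 ↔
          lam = -3 * a₃ * x₀ ^ 2 + a₃ * (x₁ ^ 2 + x₂ ^ 2) - a₁ ∨
          lam = Real.sqrt ((3 * a₃ * x₀ ^ 2 - 3 * a₃ * (x₁ ^ 2 + x₂ ^ 2) + a₁) ^ 2
                + 36 * a₃ ^ 2 * x₀ ^ 2 * (x₁ ^ 2 + x₂ ^ 2)) ∨
          lam = -Real.sqrt ((3 * a₃ * x₀ ^ 2 - 3 * a₃ * (x₁ ^ 2 + x₂ ^ 2) + a₁) ^ 2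
                + 36 * a₃ ^ 2 * x₀ ^ 2 * (x₁ ^ 2 + x₂ ^ 2))) := by
  have key : ∀ lam : ℝ,
        (lam • (1 : Matrix (Fin 3) (Fin 3) ℝ)
            - (a₃ • cubicEFG₁ x₀ x₁ x₂ + a₁ • cubicEFG₂)).det =
          (lam - (-3 * a₃ * x₀ ^ 2 + a₃ * (x₁ ^ 2 + x₂ ^ 2) - a₁)) *
            (lam ^ 2 - ((3 * a₃ * x₀ ^ 2 - 3 * a₃ * (x₁ ^ 2 + x₂ ^ 2) + a₁) ^ 2
                + 36 * a₃ ^ 2 * x₀ ^ 2 * (x₁ ^ 2 + x₂ ^ 2))) := by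
    intro lam
    rw [Matrix.det_fin_three]
    simp [cubicEFG₁, cubicEFG₂, Matrix.one_apply]
    ring
  refine ⟨key, fun lam => ?_⟩
  rw [key lam, mul_eq_zero, sub_eq_zero, sub_eq_zero]
  have hD : 0 ≤ (3 * a₃ * x₀ ^ 2 - 3 * a₃ * (x₁ ^ 2 + x₂ ^ 2) + a₁) ^ 2
      + 36 * a₃ ^ 2 * x₀ ^ 2 * (x₁ ^ 2 + x₂ ^ 2) := by positivity
  conv_lhs => rw [← Real.sq_sqrt hD]
  rw [sq_eq_sq_iff_eq_or_eq_neg]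
end
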